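/- Let l > 0 and let u be the vortex map on B_l. Then Ā(u, B_l) ≤ ∫_{B_l} √(1 + |∇u(x)|²) dx + 2πl. In particular, for every l ∈ (0, 1/2) one has the strict inequality Ā(u, B_l) < ∫_{B_l} √(1 + |∇u(x)|²) dx + π. -/

import Mathlib

open MeasureTheory Filter Metric Topology
open scoped ENNReal NNReal

noncomputable section

abbrev V2 : Type := EuclideanSpace ℝ (Fin 2)

/-- Squared Frobenius norm of (the matrix of) a continuous linear map on `ℝ²`. -/
def frobSq (L : V2 →L[ℝ] V2) : ℝ :=
  ∑ i : Fin 2, ∑ j : Fin 2, (L (EuclideanSpace.single j 1) i) ^ 2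

/-- Determinant of (the matrix of) a continuous linear map on `ℝ²`. -/
def detJ (L : V2 →L[ℝ] V2) : ℝ :=
  L (EuclideanSpace.single 0 1) 0 * L (EuclideanSpace.single 1 1) 1 -
    L (EuclideanSpace.single 1 1) 0 * L (EuclideanSpace.single 0 1) 1

/-- The vortex map `x ↦ x / |x|` (equal to `0` at the origin). -/
def vortex (x : V2) : V2 := ‖x‖⁻¹ • x

/-- The area integrand `√(1 + |∇v|² + (det ∇v)²)`. -/
def areaIntegrand (v : V2 → V2) (x : V2) : ℝ :=
  Real.sqrt (1 + frobSq (fderiv ℝ v x) + detJ (fderiv ℝ v x) ^ 2)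

/-- Area of the graph of `v` over the set `E`. -/
def graphArea (v : V2 → V2) (E : Set V2) : ℝ≥0∞ :=
  ∫⁻ x in E, ENNReal.ofReal (areaIntegrand v x)

/-- `∫_{B_l} √(1 + |∇u|²) dx` for the vortex map `u`. -/
def vortexGradArea (l : ℝ) : ℝ≥0∞ :=
  ∫⁻ x in ball (0 : V2) l, ENNReal.ofReal (Real.sqrt (1 + frobSq (fderiv ℝ vortex x)))

/-- The `L¹`-relaxed area of the graph of the vortex map over `B_l`:
the infimum of `liminf_k 𝒜(v_k, B_l)` over all sequences `(v_k)` of maps that are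
`C¹` on `B_l` and converge to the vortex map in `L¹(B_l, ℝ²)`. -/
def relaxedArea (l : ℝ) : ℝ≥0∞ :=
  sInf { a : ℝ≥0∞ | ∃ v : ℕ → V2 → V2,
    (∀ k, ContDiffOn ℝ 1 (v k) (ball (0 : V2) l)) ∧
    Tendsto (fun k => ∫⁻ x in ball (0 : V2) l, ENNReal.ofReal ‖v k x - vortex x‖)
      atTop (𝓝 0) ∧
    a = Filter.liminf (fun k => graphArea (v k) (ball (0 : V2) l)) atTop }

/-!
Off the negative half-axis the vortex map is `exp (i θ)` with `θ` the polar angle, which jumps by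
`2π` across that half-axis. Multiplying `θ` by `1 - χ`, where the cutoff `χ` is `1` near the
half-axis and vanishes outside its `2ε`-neighbourhood, removes the jump and leaves a smooth map
`exp (i φ)`. As it takes values in the unit circle its Jacobian determinant vanishes, so that its
area integrand is `√(1 + |∇φ|²) ≤ √(1 + |∇θ|²) + |θ| |∇χ|`. Here `|θ| ≤ π`, and in `B_l` the cutoff
climbs from `0` to `1` and back once across a segment of length about `l`, so that the integral of
`|∇χ|` is at most `2l + O(ε)`. The extra area thus tends to at most `2πl` as `ε → 0`.
-/

section FrobeniusDeterminant

theorem frobSq_smulRight (ℓ : V2 →L[ℝ] ℝ) (w : V2) :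
    frobSq (ℓ.smulRight w) = ‖ℓ‖ ^ 2 * ‖w‖ ^ 2 := by
  have hℓ := (EuclideanSpace.basisFun (Fin 2) ℝ).norm_dual ℓ
  have hw := EuclideanSpace.real_norm_sq_eq w
  simp only [EuclideanSpace.basisFun_apply, Fin.sum_univ_two] at hℓ hw
  simp only [frobSq, Fin.sum_univ_two, ContinuousLinearMap.smulRight_apply, PiLp.smul_apply,
    smul_eq_mul, hℓ, hw]
  ring

theorem detJ_smulRight (ℓ : V2 →L[ℝ] ℝ) (w : V2) : detJ (ℓ.smulRight w) = 0 := by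
  simp only [detJ, ContinuousLinearMap.smulRight_apply, PiLp.smul_apply, smul_eq_mul]
  ring

end FrobeniusDeterminant

section UnitCircle

/-- The isometric identification of the plane with `ℂ`; it makes the complex argument and the
complex exponential available on `V2`. -/
def toComplex : V2 ≃ₗᵢ[ℝ] ℂ := Complex.orthonormalBasisOneI.repr.symm

theorem toComplex_re (x : V2) : (toComplex x).re = x 0 := by
  simp [toComplex, Complex.orthonormalBasisOneI_repr_symm_apply]

theorem toComplex_im (x : V2) : (toComplex x).im = x 1 := by
  simp [toComplex, Complex.orthonormalBasisOneI_repr_symm_apply]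

/-- The arc-length parametrization `t ↦ (cos t, sin t)` of the unit circle, obtained from
`exp (i t)`. -/
def unitCircle (t : ℝ) : V2 := toComplex.symm (circleMap 0 1 t)

theorem contDiff_unitCircle {n : WithTop ℕ∞} : ContDiff ℝ n unitCircle :=
  toComplex.symm.contDiff.comp (contDiff_circleMap 0 1)

theorem norm_deriv_unitCircle (t : ℝ) : ‖deriv unitCircle t‖ = 1 := by
  have h : HasDerivAt unitCircle (toComplex.symm (circleMap 0 1 t * Complex.I)) t :=
    toComplex.symm.toContinuousLinearEquiv.hasFDerivAt.comp_hasDerivAt t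
      (hasDerivAt_circleMap 0 1 t)
  simp [h.deriv]

theorem lipschitzWith_unitCircle : LipschitzWith 1 unitCircle :=
  lipschitzWith_of_nnnorm_deriv_le (contDiff_unitCircle.differentiable one_ne_zero) fun t =>
    (norm_deriv_unitCircle t).le

variable {Φ : V2 → ℝ} {x : V2}

theorem fderiv_unitCircle_comp (hΦ : DifferentiableAt ℝ Φ x) :
    fderiv ℝ (fun y => unitCircle (Φ y)) x = (fderiv ℝ Φ x).smulRight (deriv unitCircle (Φ x)) := by
  have hγ : DifferentiableAt ℝ unitCircle (Φ x) :=
    contDiff_unitCircle.differentiable one_ne_zero _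
  exact (hγ.hasDerivAt.hasFDerivAt.comp x hΦ.hasFDerivAt).fderiv

theorem frobSq_fderiv_unitCircle_comp (hΦ : DifferentiableAt ℝ Φ x) :
    frobSq (fderiv ℝ (fun y => unitCircle (Φ y)) x) = ‖fderiv ℝ Φ x‖ ^ 2 := by
  rw [fderiv_unitCircle_comp hΦ, frobSq_smulRight, norm_deriv_unitCircle, one_pow, mul_one]

theorem areaIntegrand_unitCircle_comp (hΦ : DifferentiableAt ℝ Φ x) :
    areaIntegrand (fun y => unitCircle (Φ y)) x = √(1 + ‖fderiv ℝ Φ x‖ ^ 2) := by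
  rw [areaIntegrand, frobSq_fderiv_unitCircle_comp hΦ, fderiv_unitCircle_comp hΦ, detJ_smulRight,
    zero_pow two_ne_zero, add_zero]

theorem sqrt_one_add_sq_le_of_le_add {a b c : ℝ} (hc : 0 ≤ c) (hb : 0 ≤ b) (h : c ≤ a + b) :
    √(1 + c ^ 2) ≤ √(1 + a ^ 2) + b := by
  have ha : a ≤ √(1 + a ^ 2) := Real.le_sqrt_of_sq_le (by linarith)
  have hsq : √(1 + a ^ 2) ^ 2 = 1 + a ^ 2 := Real.sq_sqrt (by positivity)
  refine Real.sqrt_le_iff.2 ⟨by positivity, ?_⟩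
  calc 1 + c ^ 2 ≤ 1 + (a + b) ^ 2 := by gcongr
    _ = √(1 + a ^ 2) ^ 2 + 2 * a * b + b ^ 2 := by rw [hsq]; ring
    _ ≤ √(1 + a ^ 2) ^ 2 + 2 * √(1 + a ^ 2) * b + b ^ 2 := by gcongr
    _ = (√(1 + a ^ 2) + b) ^ 2 := by ring

theorem areaIntegrand_unitCircle_mul_le {η θ : V2 → ℝ} (hη : DifferentiableAt ℝ η x)
    (hθ : DifferentiableAt ℝ θ x) (hη_le : |η x| ≤ 1) :
    areaIntegrand (fun y => unitCircle (η y * θ y)) x ≤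
      √(1 + ‖fderiv ℝ θ x‖ ^ 2) + |θ x| * ‖fderiv ℝ η x‖ := by
  rw [areaIntegrand_unitCircle_comp (hη.fun_mul hθ)]
  refine sqrt_one_add_sq_le_of_le_add (norm_nonneg _) (by positivity) ?_
  calc ‖fderiv ℝ (fun y => η y * θ y) x‖
      = ‖η x • fderiv ℝ θ x + θ x • fderiv ℝ η x‖ := by rw [fderiv_fun_mul hη hθ]
    _ ≤ |η x| * ‖fderiv ℝ θ x‖ + |θ x| * ‖fderiv ℝ η x‖ := by
        simpa only [norm_smul, Real.norm_eq_abs] using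
          norm_add_le (η x • fderiv ℝ θ x) (θ x • fderiv ℝ η x)
    _ ≤ ‖fderiv ℝ θ x‖ + |θ x| * ‖fderiv ℝ η x‖ := by
        gcongr
        exact mul_le_of_le_one_left (norm_nonneg _) hη_le

end UnitCircle

section PolarAngle

/-- The polar angle in `(-π, π]`. It is smooth off the half-line `{x | x 0 ≤ 0 ∧ x 1 = 0}`, the
preimage under `toComplex` of the complement of `Complex.slitPlane`. -/
def polarAngle (x : V2) : ℝ := (toComplex x).arg

theorem abs_polarAngle_le_pi (x : V2) : |polarAngle x| ≤ Real.pi := Complex.abs_arg_le_pi _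

theorem polarAngle_eq_im_log : polarAngle = fun x => Complex.imCLM (Complex.log (toComplex x)) :=
  funext fun x => (Complex.log_im (toComplex x)).symm

theorem unitCircle_polarAngle {x : V2} (hx : x ≠ 0) : unitCircle (polarAngle x) = vortex x := by
  have hnorm : ‖x‖ ≠ 0 := norm_ne_zero_iff.2 hx
  rw [vortex, unitCircle, toComplex.symm_apply_eq, map_smul, eq_inv_smul_iff₀ hnorm]
  simpa [circleMap, polarAngle] using Complex.norm_mul_exp_arg_mul_I (toComplex x)

theorem notMem_slitPlane_toComplex {x : V2} :
    toComplex x ∉ Complex.slitPlane ↔ x 0 ≤ 0 ∧ x 1 = 0 := by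
  simp [Complex.mem_slitPlane_iff, toComplex_re, toComplex_im]

theorem ae_toComplex_mem_slitPlane : ∀ᵐ x : V2, toComplex x ∈ Complex.slitPlane := by
  have hker : (EuclideanSpace.proj (𝕜 := ℝ) (1 : Fin 2)).toLinearMap.ker ≠ ⊤ := by
    intro htop
    have h := LinearMap.ker_eq_top.1 htop
    simpa using DFunLike.congr_fun h (EuclideanSpace.single 1 1)
  have hnull := Measure.addHaar_submodule (volume : Measure V2) _ hker
  filter_upwards [compl_mem_ae_iff.2 hnull] with x hx
  by_contra hslit
  exact hx (notMem_slitPlane_toComplex.1 hslit).2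

variable {x : V2}

theorem ne_zero_of_toComplex_mem_slitPlane (hx : toComplex x ∈ Complex.slitPlane) : x ≠ 0 := by
  rintro rfl
  simp at hx

theorem contDiffAt_polarAngle {n : WithTop ℕ∞} (hx : toComplex x ∈ Complex.slitPlane) :
    ContDiffAt ℝ n polarAngle x := by
  rw [polarAngle_eq_im_log]
  exact Complex.imCLM.contDiff.contDiffAt.comp x <|
    ((Complex.contDiffAt_log hx).restrict_scalars ℝ).comp x toComplex.contDiff.contDiffAt

theorem norm_fderiv_polarAngle_le (hx : toComplex x ∈ Complex.slitPlane) :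
    ‖fderiv ℝ polarAngle x‖ ≤ ‖x‖⁻¹ := by
  have hlog : HasFDerivAt (fun y => Complex.log (toComplex y)) _ x :=
    (Complex.hasStrictFDerivAt_log_real hx).hasFDerivAt.comp x
      toComplex.toContinuousLinearEquiv.hasFDerivAt
  have hangle := Complex.imCLM.hasFDerivAt.comp x hlog
  rw [polarAngle_eq_im_log]
  refine hangle.fderiv.symm ▸ ?_
  refine ContinuousLinearMap.opNorm_le_bound _ (by positivity) fun v => ?_
  refine (Complex.abs_im_le_norm _).trans ?_
  simp

theorem vortex_eventuallyEq_unitCircle_polarAngle (hx : toComplex x ∈ Complex.slitPlane) :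
    vortex =ᶠ[𝓝 x] fun y => unitCircle (polarAngle y) := by
  filter_upwards [isOpen_ne.mem_nhds (ne_zero_of_toComplex_mem_slitPlane hx)] with y hy
  exact (unitCircle_polarAngle hy).symm

theorem frobSq_fderiv_vortex (hx : toComplex x ∈ Complex.slitPlane) :
    frobSq (fderiv ℝ vortex x) = ‖fderiv ℝ polarAngle x‖ ^ 2 := by
  rw [(vortex_eventuallyEq_unitCircle_polarAngle hx).fderiv_eq, frobSq_fderiv_unitCircle_comp
    ((contDiffAt_polarAngle hx).differentiableAt one_ne_zero)]

theorem vortexGradArea_lt_top (l : ℝ) : vortexGradArea l < ⊤ := by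
  have hinv : IntegrableOn (fun x : V2 => ‖x‖⁻¹) (ball 0 l) :=
    integrableOn_ball_of_norm_le_rpow (C := 1) (α := 1) (by simp) (by simp)
      (ae_of_all _ fun x => by simp [Real.rpow_neg_one]) (by fun_prop)
  have hbound : IntegrableOn (fun x : V2 => 1 + ‖x‖⁻¹) (ball 0 l) :=
    (integrableOn_const measure_ball_lt_top.ne).add hinv
  refine lt_of_le_of_lt (lintegral_mono_ae ?_) hbound.lintegral_lt_top
  filter_upwards [ae_restrict_of_ae ae_toComplex_mem_slitPlane] with x hx
  have hle := norm_fderiv_polarAngle_le hx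
  rw [frobSq_fderiv_vortex hx]
  gcongr
  simpa using sqrt_one_add_sq_le_of_le_add (a := 0) (norm_nonneg _) (by positivity)
    (hle.trans_eq (zero_add _).symm)

end PolarAngle

section SeparatedIntegrals

theorem lintegral_mul_coord {f g : ℝ → ℝ≥0∞} (hf : Measurable f) (hg : Measurable g) :
    ∫⁻ x : V2, f (x 0) * g (x 1) = (∫⁻ s, f s) * ∫⁻ t, g t := by
  have hpres := (volume_preserving_finTwoArrow ℝ).comp (PiLp.volume_preserving_ofLp (Fin 2))
  rw [← lintegral_prod_mul hf.aemeasurable hg.aemeasurable, ← Measure.volume_eq_prod]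
  exact hpres.lintegral_comp (f := fun p : ℝ × ℝ => f p.1 * g p.2) (by fun_prop)

theorem setLIntegral_ball_mul_coord_le (c : V2) (r : ℝ) {f g : ℝ → ℝ≥0∞} (hf : Measurable f)
    (hg : Measurable g) :
    ∫⁻ x in ball c r, f (x 0) * g (x 1) ≤
      (∫⁻ s in ball (c 0) r, f s) * ∫⁻ t in ball (c 1) r, g t := by
  have hcoord : ∀ x ∈ ball c r, ∀ i, x i ∈ ball (c i) r := fun x hx i => by
    rw [mem_ball_iff_norm] at hx ⊢
    exact (PiLp.norm_apply_le (x - c) i).trans_lt hx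
  calc ∫⁻ x in ball c r, f (x 0) * g (x 1)
      = ∫⁻ x in ball c r, (ball (c 0) r).indicator f (x 0) * (ball (c 1) r).indicator g (x 1) :=
        setLIntegral_congr_fun measurableSet_ball fun x hx => by
          simp only [Set.indicator_of_mem (hcoord x hx _)]
    _ ≤ ∫⁻ x : V2, (ball (c 0) r).indicator f (x 0) * (ball (c 1) r).indicator g (x 1) :=
        setLIntegral_le_lintegral _ _
    _ = (∫⁻ s in ball (c 0) r, f s) * ∫⁻ t in ball (c 1) r, g t := by
        rw [lintegral_mul_coord (hf.indicator measurableSet_ball) (hg.indicator measurableSet_ball),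
          lintegral_indicator measurableSet_ball, lintegral_indicator measurableSet_ball]

theorem enorm_proj_le_one {ι : Type*} [Fintype ι] (i : ι) :
    ‖(EuclideanSpace.proj i : EuclideanSpace ℝ ι →L[ℝ] ℝ)‖ₑ ≤ 1 := by
  rw [← ofReal_norm, ENNReal.ofReal_le_one]
  exact ContinuousLinearMap.opNorm_le_bound _ zero_le_one fun v => by
    simpa using PiLp.norm_apply_le v i

theorem enorm_fderiv_mul_coord_le {f g : ℝ → ℝ} {x : V2} (hf : DifferentiableAt ℝ f (x 0))
    (hg : DifferentiableAt ℝ g (x 1)) :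
    ‖fderiv ℝ (fun y : V2 => f (y 0) * g (y 1)) x‖ₑ ≤
      ‖deriv f (x 0)‖ₑ * ‖g (x 1)‖ₑ + ‖f (x 0)‖ₑ * ‖deriv g (x 1)‖ₑ := by
  have hfderiv : fderiv ℝ (fun y : V2 => f (y 0) * g (y 1)) x =
      f (x 0) • deriv g (x 1) • EuclideanSpace.proj (𝕜 := ℝ) 1 +
        g (x 1) • deriv f (x 0) • EuclideanSpace.proj (𝕜 := ℝ) 0 :=
    ((hf.hasDerivAt.comp_hasFDerivAt x (EuclideanSpace.proj (𝕜 := ℝ) 0).hasFDerivAt).mul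
      (hg.hasDerivAt.comp_hasFDerivAt x (EuclideanSpace.proj (𝕜 := ℝ) 1).hasFDerivAt)).fderiv
  rw [hfderiv]
  refine (enorm_add_le (E := V2 →L[ℝ] ℝ) _ _).trans ?_
  simp only [enorm_smul]
  calc ‖f (x 0)‖ₑ * (‖deriv g (x 1)‖ₑ * ‖(EuclideanSpace.proj 1 : V2 →L[ℝ] ℝ)‖ₑ) +
        ‖g (x 1)‖ₑ * (‖deriv f (x 0)‖ₑ * ‖(EuclideanSpace.proj 0 : V2 →L[ℝ] ℝ)‖ₑ)
      ≤ ‖f (x 0)‖ₑ * (‖deriv g (x 1)‖ₑ * 1) + ‖g (x 1)‖ₑ * (‖deriv f (x 0)‖ₑ * 1) := by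
        gcongr <;> exact enorm_proj_le_one _
    _ = ‖deriv f (x 0)‖ₑ * ‖g (x 1)‖ₑ + ‖f (x 0)‖ₑ * ‖deriv g (x 1)‖ₑ := by ring

theorem lintegral_enorm_deriv_le_of_antitone {f : ℝ → ℝ} {a b : ℝ} (hanti : Antitone f)
    (hdiff : Differentiable ℝ f) (hf : ∀ t, f t ∈ Set.Icc a b) :
    ∫⁻ t, ‖deriv f t‖ₑ ≤ ENNReal.ofReal (b - a) := by
  calc ∫⁻ t, ‖deriv f t‖ₑ = ∫⁻ t in Set.univ, ENNReal.ofReal (-deriv f t) := by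
        rw [setLIntegral_univ]
        refine lintegral_congr fun t => ?_
        rw [← enorm_neg, Real.enorm_of_nonneg (neg_nonneg.2 hanti.deriv_nonpos)]
    _ = volume (f '' Set.univ) :=
        lintegral_deriv_eq_volume_image_of_antitoneOn MeasurableSet.univ
          (fun t _ => (hdiff t).hasDerivAt.hasDerivWithinAt) (hanti.antitoneOn _)
    _ ≤ volume (Set.Icc a b) := measure_mono (by rintro _ ⟨t, -, rfl⟩; exact hf t)
    _ = ENNReal.ofReal (b - a) := Real.volume_Icc

end SeparatedIntegrals

section Cutoff

/-- A smooth transition from `1` on `(-∞, ε]` to `0` on `[2ε, ∞)`, for `ε > 0`. -/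
def cutoff (ε t : ℝ) : ℝ := Real.smoothTransition (2 - t / ε)

/-- The even plateau function built from `cutoff`: it is `1` on `[-ε, ε]` and vanishes off
`(-2ε, 2ε)`. -/
def evenCutoff (ε t : ℝ) : ℝ := cutoff ε t * cutoff ε (-t)

variable {ε : ℝ}

theorem cutoff_mem_Icc (ε t : ℝ) : cutoff ε t ∈ Set.Icc (0 : ℝ) 1 :=
  ⟨Real.smoothTransition.nonneg _, Real.smoothTransition.le_one _⟩

theorem evenCutoff_mem_Icc (ε t : ℝ) : evenCutoff ε t ∈ Set.Icc (0 : ℝ) 1 :=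
  unitInterval.mul_mem (cutoff_mem_Icc ε t) (cutoff_mem_Icc ε (-t))

theorem enorm_cutoff_le_one (ε t : ℝ) : ‖cutoff ε t‖ₑ ≤ 1 := by
  rw [Real.enorm_of_nonneg (cutoff_mem_Icc ε t).1, ENNReal.ofReal_le_one]
  exact (cutoff_mem_Icc ε t).2

theorem enorm_evenCutoff_le_one (ε t : ℝ) : ‖evenCutoff ε t‖ₑ ≤ 1 := by
  rw [Real.enorm_of_nonneg (evenCutoff_mem_Icc ε t).1, ENNReal.ofReal_le_one]
  exact (evenCutoff_mem_Icc ε t).2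

theorem cutoff_eq_one (hε : 0 < ε) {t : ℝ} (ht : t ≤ ε) : cutoff ε t = 1 :=
  Real.smoothTransition.one_of_one_le (by linarith [(div_le_one hε).2 ht])

theorem cutoff_eq_zero (hε : 0 < ε) {t : ℝ} (ht : 2 * ε ≤ t) : cutoff ε t = 0 :=
  Real.smoothTransition.zero_of_nonpos (by linarith [(le_div_iff₀ hε).2 ht])

theorem evenCutoff_eq_one (hε : 0 < ε) {t : ℝ} (ht : |t| ≤ ε) : evenCutoff ε t = 1 := by
  rw [evenCutoff, cutoff_eq_one hε (abs_le.1 ht).2, cutoff_eq_one hε (neg_le.1 (abs_le.1 ht).1),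
    one_mul]

theorem evenCutoff_eq_zero (hε : 0 < ε) {t : ℝ} (ht : 2 * ε ≤ |t|) : evenCutoff ε t = 0 := by
  rcases le_abs.1 ht with hpos | hneg
  · rw [evenCutoff, cutoff_eq_zero hε hpos, zero_mul]
  · rw [evenCutoff, cutoff_eq_zero hε hneg, mul_zero]

theorem antitone_cutoff (hε : 0 ≤ ε) : Antitone (cutoff ε) := fun _ _ hst =>
  Real.smoothTransition.monotone (by gcongr)

theorem contDiff_cutoff (ε : ℝ) {n : ℕ∞} : ContDiff ℝ n (cutoff ε) :=
  Real.smoothTransition.contDiff.comp (contDiff_const.sub (contDiff_id.div_const ε))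

theorem contDiff_evenCutoff (ε : ℝ) {n : ℕ∞} : ContDiff ℝ n (evenCutoff ε) :=
  (contDiff_cutoff ε).mul ((contDiff_cutoff ε).comp contDiff_neg)

theorem differentiable_cutoff (ε : ℝ) : Differentiable ℝ (cutoff ε) :=
  (contDiff_cutoff ε (n := 1)).differentiable one_ne_zero

theorem differentiable_evenCutoff (ε : ℝ) : Differentiable ℝ (evenCutoff ε) :=
  (contDiff_evenCutoff ε (n := 1)).differentiable one_ne_zero

theorem lintegral_enorm_deriv_cutoff_le (hε : 0 ≤ ε) : ∫⁻ t, ‖deriv (cutoff ε) t‖ₑ ≤ 1 := by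
  simpa using lintegral_enorm_deriv_le_of_antitone (antitone_cutoff hε) (differentiable_cutoff ε)
    (cutoff_mem_Icc ε)

theorem enorm_deriv_evenCutoff_le (ε t : ℝ) :
    ‖deriv (evenCutoff ε) t‖ₑ ≤ ‖deriv (cutoff ε) t‖ₑ + ‖deriv (cutoff ε) (-t)‖ₑ := by
  have hderiv : deriv (evenCutoff ε) t =
      deriv (cutoff ε) t * cutoff ε (-t) + cutoff ε t * (deriv (cutoff ε) (-t) * -1) :=
    ((differentiable_cutoff ε t).hasDerivAt.mul
      ((differentiable_cutoff ε (-t)).hasDerivAt.comp t (hasDerivAt_neg t))).deriv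
  rw [hderiv]
  refine (enorm_add_le _ _).trans ?_
  simp only [enorm_mul, enorm_neg, enorm_one, mul_one]
  gcongr
  · exact mul_le_of_le_one_right' (enorm_cutoff_le_one ε (-t))
  · exact mul_le_of_le_one_left' (enorm_cutoff_le_one ε t)

theorem lintegral_enorm_deriv_evenCutoff_le (hε : 0 ≤ ε) :
    ∫⁻ t, ‖deriv (evenCutoff ε) t‖ₑ ≤ 2 := by
  calc ∫⁻ t, ‖deriv (evenCutoff ε) t‖ₑ
      ≤ ∫⁻ t, (‖deriv (cutoff ε) t‖ₑ + ‖deriv (cutoff ε) (-t)‖ₑ) :=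
        lintegral_mono (enorm_deriv_evenCutoff_le ε)
    _ = (∫⁻ t, ‖deriv (cutoff ε) t‖ₑ) + ∫⁻ t, ‖deriv (cutoff ε) t‖ₑ := by
        rw [lintegral_add_left (measurable_deriv _).enorm,
          lintegral_neg_eq_self (μ := volume) fun t => ‖deriv (cutoff ε) t‖ₑ]
    _ ≤ 1 + 1 := by gcongr <;> exact lintegral_enorm_deriv_cutoff_le hε
    _ = 2 := one_add_one_eq_two

theorem setLIntegral_enorm_le_measure_inter {α : Type*} [MeasurableSpace α] {μ : Measure α}
    {f : α → ℝ} {s t : Set α} (ht : MeasurableSet t) (hf_le : ∀ x, ‖f x‖ₑ ≤ 1)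
    (hf_zero : ∀ x ∉ t, f x = 0) : ∫⁻ x in s, ‖f x‖ₑ ∂μ ≤ μ (t ∩ s) := by
  calc ∫⁻ x in s, ‖f x‖ₑ ∂μ ≤ ∫⁻ x in s, t.indicator 1 x ∂μ :=
        lintegral_mono fun x => Set.le_indicator (fun x _ => hf_le x)
          (fun x hx => by simp [hf_zero x hx]) x
    _ = μ (t ∩ s) := by rw [lintegral_indicator_one ht, Measure.restrict_apply ht]

theorem setLIntegral_ball_enorm_cutoff_le (hε : 0 < ε) (l : ℝ) :
    ∫⁻ t in ball 0 l, ‖cutoff ε t‖ₑ ≤ ENNReal.ofReal (l + 2 * ε) := by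
  calc ∫⁻ t in ball 0 l, ‖cutoff ε t‖ₑ ≤ volume (Set.Iic (2 * ε) ∩ ball 0 l) :=
        setLIntegral_enorm_le_measure_inter measurableSet_Iic (enorm_cutoff_le_one ε)
          fun t ht => cutoff_eq_zero hε (not_le.1 ht).le
    _ ≤ volume (Set.Icc (-l) (2 * ε)) := measure_mono fun t ht =>
        ⟨(abs_lt.1 (mem_ball_zero_iff.1 ht.2)).1.le, ht.1⟩
    _ = ENNReal.ofReal (l + 2 * ε) := by rw [Real.volume_Icc, sub_neg_eq_add, add_comm]

theorem setLIntegral_enorm_evenCutoff_le (hε : 0 < ε) (s : Set ℝ) :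
    ∫⁻ t in s, ‖evenCutoff ε t‖ₑ ≤ ENNReal.ofReal (4 * ε) := by
  calc ∫⁻ t in s, ‖evenCutoff ε t‖ₑ ≤ volume (closedBall 0 (2 * ε) ∩ s) :=
        setLIntegral_enorm_le_measure_inter measurableSet_closedBall (enorm_evenCutoff_le_one ε)
          fun t ht => evenCutoff_eq_zero hε (le_of_not_ge fun h => ht (by simpa using h))
    _ ≤ volume (closedBall (0 : ℝ) (2 * ε)) := measure_mono Set.inter_subset_left
    _ = ENNReal.ofReal (4 * ε) := by rw [Real.volume_closedBall]; ring_nf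

end Cutoff

section SlitCutoff

/-- A smooth function equal to `1` near the half-line where `polarAngle` jumps and supported in its
`2ε`-neighbourhood in each coordinate. -/
def slitCutoff (ε : ℝ) (x : V2) : ℝ := cutoff ε (x 0) * evenCutoff ε (x 1)

variable {ε : ℝ}

theorem slitCutoff_mem_Icc (ε : ℝ) (x : V2) : slitCutoff ε x ∈ Set.Icc (0 : ℝ) 1 :=
  unitInterval.mul_mem (cutoff_mem_Icc ε _) (evenCutoff_mem_Icc ε _)

theorem contDiff_slitCutoff (ε : ℝ) {n : ℕ∞} : ContDiff ℝ n (slitCutoff ε) :=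
  ((contDiff_cutoff ε).comp (by fun_prop)).mul ((contDiff_evenCutoff ε).comp (by fun_prop))

theorem slitCutoff_eventuallyEq_one (hε : 0 < ε) {x : V2} (hx : toComplex x ∉ Complex.slitPlane) :
    slitCutoff ε =ᶠ[𝓝 x] 1 := by
  obtain ⟨hx0, hx1⟩ := notMem_slitPlane_toComplex.1 hx
  have hcoord0 : ∀ᶠ y : V2 in 𝓝 x, y 0 < ε :=
    ContinuousAt.eventually_lt (by fun_prop) continuousAt_const (hx0.trans_lt hε)
  have hcoord1 : ∀ᶠ y : V2 in 𝓝 x, |y 1| < ε :=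
    ContinuousAt.eventually_lt (by fun_prop) continuousAt_const (by simpa [hx1] using hε)
  filter_upwards [hcoord0, hcoord1] with y hy0 hy1
  rw [slitCutoff, cutoff_eq_one hε hy0.le, evenCutoff_eq_one hε hy1.le, one_mul, Pi.one_apply]

theorem setLIntegral_ball_enorm_slitCutoff_le (hε : 0 < ε) (l : ℝ) :
    ∫⁻ x in ball 0 l, ‖slitCutoff ε x‖ₑ ≤
      ENNReal.ofReal ((l + 2 * ε) * (4 * ε)) := by
  simp only [slitCutoff, enorm_mul]
  calc ∫⁻ x in ball (0 : V2) l, ‖cutoff ε (x 0)‖ₑ * ‖evenCutoff ε (x 1)‖ₑ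
      ≤ (∫⁻ s in ball 0 l, ‖cutoff ε s‖ₑ) * ∫⁻ t in ball 0 l, ‖evenCutoff ε t‖ₑ :=
        setLIntegral_ball_mul_coord_le 0 l (differentiable_cutoff ε).continuous.measurable.enorm
          (differentiable_evenCutoff ε).continuous.measurable.enorm
    _ ≤ ENNReal.ofReal (l + 2 * ε) * ENNReal.ofReal (4 * ε) :=
        mul_le_mul' (setLIntegral_ball_enorm_cutoff_le hε l) (setLIntegral_enorm_evenCutoff_le hε _)
    _ = ENNReal.ofReal ((l + 2 * ε) * (4 * ε)) := (ENNReal.ofReal_mul' (by positivity)).symm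

theorem setLIntegral_ball_enorm_fderiv_slitCutoff_le (hε : 0 < ε) {l : ℝ} (hl : 0 ≤ l) :
    ∫⁻ x in ball 0 l, ‖fderiv ℝ (slitCutoff ε) x‖ₑ ≤ ENNReal.ofReal (2 * l + 8 * ε) := by
  have hmeas : Measurable fun t => ‖cutoff ε t‖ₑ :=
    (differentiable_cutoff ε).continuous.measurable.enorm
  have hmeas_even : Measurable fun t => ‖evenCutoff ε t‖ₑ :=
    (differentiable_evenCutoff ε).continuous.measurable.enorm
  have hmeas_deriv (f : ℝ → ℝ) : Measurable fun t => ‖deriv f t‖ₑ := (measurable_deriv f).enorm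
  calc ∫⁻ x in ball 0 l, ‖fderiv ℝ (slitCutoff ε) x‖ₑ
      ≤ ∫⁻ x in ball (0 : V2) l, (‖deriv (cutoff ε) (x 0)‖ₑ * ‖evenCutoff ε (x 1)‖ₑ +
          ‖cutoff ε (x 0)‖ₑ * ‖deriv (evenCutoff ε) (x 1)‖ₑ) :=
        lintegral_mono fun x =>
          enorm_fderiv_mul_coord_le (differentiable_cutoff ε _) (differentiable_evenCutoff ε _)
    _ = (∫⁻ x in ball (0 : V2) l, ‖deriv (cutoff ε) (x 0)‖ₑ * ‖evenCutoff ε (x 1)‖ₑ) +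
          ∫⁻ x in ball (0 : V2) l, ‖cutoff ε (x 0)‖ₑ * ‖deriv (evenCutoff ε) (x 1)‖ₑ :=
        lintegral_add_left (((hmeas_deriv _).comp (by fun_prop)).mul
          (hmeas_even.comp (by fun_prop))) _
    _ ≤ (∫⁻ s in ball 0 l, ‖deriv (cutoff ε) s‖ₑ) * (∫⁻ t in ball 0 l, ‖evenCutoff ε t‖ₑ) +
          (∫⁻ s in ball 0 l, ‖cutoff ε s‖ₑ) * ∫⁻ t in ball 0 l, ‖deriv (evenCutoff ε) t‖ₑ :=
        add_le_add (setLIntegral_ball_mul_coord_le 0 l (hmeas_deriv _) hmeas_even)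
          (setLIntegral_ball_mul_coord_le 0 l hmeas (hmeas_deriv _))
    _ ≤ 1 * ENNReal.ofReal (4 * ε) + ENNReal.ofReal (l + 2 * ε) * 2 := by
        gcongr
        · exact (setLIntegral_le_lintegral _ _).trans (lintegral_enorm_deriv_cutoff_le hε.le)
        · exact setLIntegral_enorm_evenCutoff_le hε _
        · exact setLIntegral_ball_enorm_cutoff_le hε l
        · exact (setLIntegral_le_lintegral _ _).trans (lintegral_enorm_deriv_evenCutoff_le hε.le)
    _ = ENNReal.ofReal (2 * l + 8 * ε) := by
        rw [one_mul, ← ENNReal.ofReal_ofNat 2, ← ENNReal.ofReal_mul (by positivity),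
          ← ENNReal.ofReal_add (by positivity) (by positivity)]
        ring_nf

end SlitCutoff

section VortexApprox

/-- The recovery sequence for the relaxed area, as `ε → 0`: the vortex map with its angle multiplied
by a factor vanishing near the half-line where the angle jumps. -/
def vortexApprox (ε : ℝ) (x : V2) : V2 := unitCircle ((1 - slitCutoff ε x) * polarAngle x)

variable {ε : ℝ}

theorem contDiff_vortexApprox (hε : 0 < ε) {n : ℕ∞} : ContDiff ℝ n (vortexApprox ε) := by
  refine contDiff_unitCircle.comp (contDiff_iff_contDiffAt.2 fun x => ?_)
  by_cases hx : toComplex x ∈ Complex.slitPlane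
  · exact (contDiff_const.sub (contDiff_slitCutoff ε)).contDiffAt.mul (contDiffAt_polarAngle hx)
  · refine (contDiffAt_const (c := 0)).congr_of_eventuallyEq ?_
    filter_upwards [slitCutoff_eventuallyEq_one hε hx] with y hy
    simp [hy]

theorem norm_vortexApprox_sub_vortex_le {x : V2} (hx : x ≠ 0) :
    ‖vortexApprox ε x - vortex x‖ ≤ Real.pi * ‖slitCutoff ε x‖ := by
  calc ‖vortexApprox ε x - vortex x‖
      ≤ ‖(1 - slitCutoff ε x) * polarAngle x - polarAngle x‖ := by
        simpa [vortexApprox, ← unitCircle_polarAngle hx] using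
          lipschitzWith_unitCircle.norm_sub_le ((1 - slitCutoff ε x) * polarAngle x) (polarAngle x)
    _ = |polarAngle x| * ‖slitCutoff ε x‖ := by
        rw [← Real.norm_eq_abs, ← norm_mul, ← norm_neg]
        ring_nf
    _ ≤ Real.pi * ‖slitCutoff ε x‖ := by
        gcongr
        exact abs_polarAngle_le_pi x

theorem lintegral_norm_vortexApprox_sub_vortex_le (hε : 0 < ε) (l : ℝ) :
    ∫⁻ x in ball 0 l, ENNReal.ofReal ‖vortexApprox ε x - vortex x‖ ≤
      ENNReal.ofReal (Real.pi * ((l + 2 * ε) * (4 * ε))) := by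
  calc ∫⁻ x in ball 0 l, ENNReal.ofReal ‖vortexApprox ε x - vortex x‖
      ≤ ∫⁻ x in ball 0 l, ENNReal.ofReal Real.pi * ‖slitCutoff ε x‖ₑ := by
        refine lintegral_mono_ae ?_
        filter_upwards [ae_restrict_of_ae (Measure.ae_ne volume 0)] with x hx
        rw [← ofReal_norm, ← ENNReal.ofReal_mul Real.pi_nonneg]
        exact ENNReal.ofReal_le_ofReal (norm_vortexApprox_sub_vortex_le hx)
    _ = ENNReal.ofReal Real.pi * ∫⁻ x in ball 0 l, ‖slitCutoff ε x‖ₑ :=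
        lintegral_const_mul' _ _ ENNReal.ofReal_ne_top
    _ ≤ ENNReal.ofReal Real.pi * ENNReal.ofReal ((l + 2 * ε) * (4 * ε)) := by
        gcongr
        exact setLIntegral_ball_enorm_slitCutoff_le hε l
    _ = ENNReal.ofReal (Real.pi * ((l + 2 * ε) * (4 * ε))) :=
        (ENNReal.ofReal_mul Real.pi_nonneg).symm

theorem areaIntegrand_vortexApprox_le (ε : ℝ) {x : V2} (hx : toComplex x ∈ Complex.slitPlane) :
    areaIntegrand (vortexApprox ε) x ≤
      √(1 + frobSq (fderiv ℝ vortex x)) + Real.pi * ‖fderiv ℝ (slitCutoff ε) x‖ := by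
  have hcutoff : DifferentiableAt ℝ (slitCutoff ε) x :=
    (contDiff_slitCutoff ε (n := 1)).differentiable one_ne_zero x
  have hangle : DifferentiableAt ℝ polarAngle x :=
    (contDiffAt_polarAngle hx).differentiableAt one_ne_zero
  have hfactor : |1 - slitCutoff ε x| ≤ 1 := by
    obtain ⟨hnonneg, hle⟩ := slitCutoff_mem_Icc ε x
    exact abs_le.2 ⟨by linarith, by linarith⟩
  calc areaIntegrand (vortexApprox ε) x
      ≤ √(1 + ‖fderiv ℝ polarAngle x‖ ^ 2) +
          |polarAngle x| * ‖fderiv ℝ (fun y => 1 - slitCutoff ε y) x‖ :=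
        areaIntegrand_unitCircle_mul_le (hcutoff.const_sub 1) hangle hfactor
    _ = √(1 + frobSq (fderiv ℝ vortex x)) + |polarAngle x| * ‖fderiv ℝ (slitCutoff ε) x‖ := by
        rw [frobSq_fderiv_vortex hx, fderiv_const_sub, norm_neg]
    _ ≤ √(1 + frobSq (fderiv ℝ vortex x)) + Real.pi * ‖fderiv ℝ (slitCutoff ε) x‖ := by
        gcongr
        exact abs_polarAngle_le_pi x

theorem graphArea_vortexApprox_le (hε : 0 < ε) {l : ℝ} (hl : 0 ≤ l) :
    graphArea (vortexApprox ε) (ball 0 l) ≤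
      vortexGradArea l + ENNReal.ofReal (Real.pi * (2 * l + 8 * ε)) := by
  have hmeas : Measurable fun x => ENNReal.ofReal Real.pi * ‖fderiv ℝ (slitCutoff ε) x‖ₑ :=
    (measurable_fderiv ℝ (slitCutoff ε)).enorm.const_mul _
  calc graphArea (vortexApprox ε) (ball 0 l)
      ≤ ∫⁻ x in ball 0 l, (ENNReal.ofReal √(1 + frobSq (fderiv ℝ vortex x)) +
          ENNReal.ofReal Real.pi * ‖fderiv ℝ (slitCutoff ε) x‖ₑ) := by
        refine lintegral_mono_ae ?_
        filter_upwards [ae_restrict_of_ae ae_toComplex_mem_slitPlane] with x hx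
        rw [← ofReal_norm, ← ENNReal.ofReal_mul Real.pi_nonneg,
          ← ENNReal.ofReal_add (Real.sqrt_nonneg _) (by positivity)]
        exact ENNReal.ofReal_le_ofReal (areaIntegrand_vortexApprox_le ε hx)
    _ = vortexGradArea l +
          ENNReal.ofReal Real.pi * ∫⁻ x in ball 0 l, ‖fderiv ℝ (slitCutoff ε) x‖ₑ := by
        rw [lintegral_add_right _ hmeas, lintegral_const_mul' _ _ ENNReal.ofReal_ne_top,
          vortexGradArea]
    _ ≤ vortexGradArea l + ENNReal.ofReal Real.pi * ENNReal.ofReal (2 * l + 8 * ε) := by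
        gcongr
        exact setLIntegral_ball_enorm_fderiv_slitCutoff_le hε hl
    _ = vortexGradArea l + ENNReal.ofReal (Real.pi * (2 * l + 8 * ε)) := by
        rw [ENNReal.ofReal_mul Real.pi_nonneg]

end VortexApprox

section RelaxedArea

theorem relaxedArea_le_of_tendsto {l : ℝ} {v : ℕ → V2 → V2} {δ A : ℕ → ℝ≥0∞} {a : ℝ≥0∞}
    (hv : ∀ k, ContDiffOn ℝ 1 (v k) (ball 0 l))
    (hv_le : ∀ k, ∫⁻ x in ball 0 l, ENNReal.ofReal ‖v k x - vortex x‖ ≤ δ k)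
    (hδ : Tendsto δ atTop (𝓝 0)) (hv_area : ∀ k, graphArea (v k) (ball 0 l) ≤ A k)
    (hA : Tendsto A atTop (𝓝 a)) : relaxedArea l ≤ a := by
  have hL1 : Tendsto (fun k => ∫⁻ x in ball 0 l, ENNReal.ofReal ‖v k x - vortex x‖) atTop (𝓝 0) :=
    tendsto_of_tendsto_of_tendsto_of_le_of_le tendsto_const_nhds hδ (fun _ => zero_le) hv_le
  calc relaxedArea l ≤ liminf (fun k => graphArea (v k) (ball 0 l)) atTop :=
        sInf_le ⟨v, hv, hL1, rfl⟩
    _ ≤ liminf A atTop := liminf_le_liminf (Eventually.of_forall hv_area)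
    _ = a := hA.liminf_eq

theorem relaxedArea_le_vortexGradArea_add {l : ℝ} (hl : 0 ≤ l) :
    relaxedArea l ≤ vortexGradArea l + ENNReal.ofReal (2 * Real.pi * l) := by
  have hpos (k : ℕ) : (0 : ℝ) < 1 / (k + 1) := Nat.one_div_pos_of_nat
  have hscale {f : ℝ → ℝ} (hf : Continuous f) :
      Tendsto (fun k : ℕ => ENNReal.ofReal (f (1 / ((k : ℝ) + 1)))) atTop
        (𝓝 (ENNReal.ofReal (f 0))) :=
    ENNReal.tendsto_ofReal ((hf.tendsto 0).comp tendsto_one_div_add_atTop_nhds_zero_nat)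
  have hL1 := hscale (f := fun ε => Real.pi * ((l + 2 * ε) * (4 * ε))) (by fun_prop)
  have harea := hscale (f := fun ε => Real.pi * (2 * l + 8 * ε)) (by fun_prop)
  calc relaxedArea l
      ≤ vortexGradArea l + ENNReal.ofReal (Real.pi * (2 * l + 8 * 0)) :=
        relaxedArea_le_of_tendsto (v := fun k => vortexApprox (1 / (k + 1)))
          (fun k => (contDiff_vortexApprox (hpos k) (n := 1)).contDiffOn)
          (fun k => lintegral_norm_vortexApprox_sub_vortex_le (hpos k) l) (by simpa using hL1)
          (fun k => graphArea_vortexApprox_le (hpos k) hl) (harea.const_add _)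
    _ = vortexGradArea l + ENNReal.ofReal (2 * Real.pi * l) := by ring_nf

end RelaxedArea

/-- The relaxed area of the graph of the vortex map over `B_l` is at most
`∫_{B_l} √(1 + |∇u|²) dx + 2πl`; in particular for `l < 1/2` the strict inequality
`Ā(u, B_l) < ∫_{B_l} √(1 + |∇u|²) dx + π` holds. -/
theorem relaxedArea_vortex_le_cylinder (l : ℝ) (hl : 0 < l) :
    relaxedArea l ≤ vortexGradArea l + ENNReal.ofReal (2 * Real.pi * l) ∧
    (l < 1 / 2 → relaxedArea l < vortexGradArea l + ENNReal.ofReal Real.pi) := by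
  have hle := relaxedArea_le_vortexGradArea_add hl.le
  refine ⟨hle, fun hl_lt => hle.trans_lt ?_⟩
  have hlt : ENNReal.ofReal (2 * Real.pi * l) < ENNReal.ofReal Real.pi := by
    rw [ENNReal.ofReal_lt_ofReal_iff Real.pi_pos]
    nlinarith [Real.pi_pos]
  exact ENNReal.add_lt_add_left (vortexGradArea_lt_top l).ne hlt
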